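/- Suppose λ is a multicore. Then λ lies in a core block (i.e., w(λ) is minimal among the weights of all multipartitions having the same hub as λ) if and only if there exists a multicharge a' = (a'_1,…,a'_r) ∈ ℤ^r with a'_j ≡ a_j (mod e) for all j such that |γ^{jk}_i(λ)| = |ℓ^{a'}_{ij}(λ) − ℓ^{a'}_{ik}(λ)| ≤ 1 for every i ∈ {0,…,e−1} and all j,k ∈ {1,…,r}. -/

import Mathlib

/-!
Combinatorial framework for multipartitions, residues, β-sets, abacus levels,
weights, hubs, core blocks and Scopes-type moves, following Fayers and the paper.
Rows and columns of Young diagrams are indexed from 0, so the node in row `b`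
and column `c` (0-based) of component `j` has residue `a j + c - b` mod `e`.
-/

open scoped Classical

namespace AK

/-- A partition, given by its (antitone, finitely supported) sequence of parts,
rows indexed from `0`. -/
structure PartitionFun : Type where
  part : ℕ → ℕ
  antitone : Antitone part
  finite_support : ∃ N, ∀ b, N ≤ b → part b = 0

/-- The node in row `b`, column `c` (0-based) belongs to the Young diagram. -/
def PartitionFun.InDiag (lam : PartitionFun) (b c : ℕ) : Prop := c < lam.part b

/-- The node `(b,c)` is removable: deleting it leaves the diagram of a partition. -/
def PartitionFun.Removable (lam : PartitionFun) (b c : ℕ) : Prop :=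
  lam.part b = c + 1 ∧ lam.part (b + 1) ≤ c

/-- The node `(b,c)` is addable: adjoining it gives the diagram of a partition. -/
def PartitionFun.Addable (lam : PartitionFun) (b c : ℕ) : Prop :=
  lam.part b = c ∧ (b = 0 ∨ lam.part b < lam.part (b - 1))

/-- An `r`-multipartition. -/
abbrev Multipartition (r : ℕ) := Fin r → PartitionFun

/-- Nodes: `(b, c, j)` with row `b`, column `c`, component `j`. -/
abbrev Node (r : ℕ) := ℕ × ℕ × Fin r

/-- The Young diagram of a multipartition, as a set of nodes. -/
def diag {r : ℕ} (lam : Multipartition r) : Set (Node r) :=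
  {x | (lam x.2.2).InDiag x.1 x.2.1}

/-- The size `n` of a multipartition of `n`. -/
noncomputable def msize {r : ℕ} (lam : Multipartition r) : ℕ :=
  Set.ncard (diag lam)

/-- `c_i(λ)`: the number of nodes of residue `i` (mod `e`). -/
noncomputable def nodeCount {r : ℕ} (e : ℕ) (a : Fin r → ℤ) (lam : Multipartition r)
    (i : ℤ) : ℕ :=
  Set.ncard {x : Node r | (lam x.2.2).InDiag x.1 x.2.1 ∧
    (a x.2.2 + (x.2.1 : ℤ) - (x.1 : ℤ)) % (e : ℤ) = i % e}

/-- Number of removable nodes of residue `i` in component `j`. -/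
noncomputable def removableCount {r : ℕ} (e : ℕ) (a : Fin r → ℤ) (lam : Multipartition r)
    (i : ℤ) (j : Fin r) : ℕ :=
  Set.ncard {p : ℕ × ℕ | (lam j).Removable p.1 p.2 ∧
    (a j + (p.2 : ℤ) - (p.1 : ℤ)) % (e : ℤ) = i % e}

/-- Number of addable nodes of residue `i` in component `j`. -/
noncomputable def addableCount {r : ℕ} (e : ℕ) (a : Fin r → ℤ) (lam : Multipartition r)
    (i : ℤ) (j : Fin r) : ℕ :=
  Set.ncard {p : ℕ × ℕ | (lam j).Addable p.1 p.2 ∧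
    (a j + (p.2 : ℤ) - (p.1 : ℤ)) % (e : ℤ) = i % e}

/-- `δ^j_i(λ)` = (removable `i`-nodes of component `j`) − (addable `i`-nodes of component `j`). -/
noncomputable def delta {r : ℕ} (e : ℕ) (a : Fin r → ℤ) (lam : Multipartition r)
    (i : ℤ) (j : Fin r) : ℤ :=
  (removableCount e a lam i j : ℤ) - (addableCount e a lam i j : ℤ)

/-- The hub `δ_i(λ) = Σ_j δ^j_i(λ)`. -/
noncomputable def hub {r : ℕ} (e : ℕ) (a : Fin r → ℤ) (lam : Multipartition r) (i : ℤ) : ℤ :=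
  ∑ j : Fin r, delta e a lam i j

/-- Two multipartitions have the same hub. -/
def SameHub {r : ℕ} (e : ℕ) (a : Fin r → ℤ) (lam mu : Multipartition r) : Prop :=
  ∀ i : ℤ, hub e a lam i = hub e a mu i

/-- `d_i(m) = min { δ^j_i(m) : 1 ≤ j ≤ r }`. -/
noncomputable def dmin {r : ℕ} (e : ℕ) (a : Fin r → ℤ) (lam : Multipartition r) (i : ℤ) : ℤ :=
  sInf {x : ℤ | ∃ j : Fin r, delta e a lam i j = x}

/-- The weight `w(λ) = Σ_j c_{a_j}(λ) − (1/2) Σ_{i∈ℤ/eℤ} (c_i(λ) − c_{i+1}(λ))²`. -/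
noncomputable def weight {r : ℕ} (e : ℕ) (a : Fin r → ℤ) (lam : Multipartition r) : ℚ :=
  (∑ j : Fin r, (nodeCount e a lam (a j) : ℚ)) -
    (1 / 2 : ℚ) * ∑ i ∈ Finset.range e,
      ((nodeCount e a lam (i : ℤ) : ℚ) - (nodeCount e a lam ((i : ℤ) + 1) : ℚ)) ^ 2

/-- The β-set `B^j = {λ_b + a_j − b : b ≥ 1}` (here with rows indexed from 0). -/
def betaSet (aj : ℤ) (lam : PartitionFun) : Set ℤ :=
  {x | ∃ b : ℕ, x = (lam.part b : ℤ) + aj - ((b : ℤ) + 1)}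

/-- A partition is an `e`-core: `β ∈ B` implies `β − e ∈ B`. -/
def IsECore (e : ℕ) (aj : ℤ) (lam : PartitionFun) : Prop :=
  ∀ x ∈ betaSet aj lam, x - (e : ℤ) ∈ betaSet aj lam

/-- A multicore: all components are `e`-cores. -/
def IsMulticore {r : ℕ} (e : ℕ) (a : Fin r → ℤ) (lam : Multipartition r) : Prop :=
  ∀ j, IsECore e (a j) (lam j)

/-- `ℓ^a_{ij}(λ)`: the level of the lowest bead on runner `i`, i.e. the largest `x`
with `x·e + i` in the β-set. -/
noncomputable def level (e : ℕ) (aj : ℤ) (lam : PartitionFun) (i : ℕ) : ℤ :=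
  sSup {x : ℤ | x * (e : ℤ) + (i : ℤ) ∈ betaSet aj lam}

/-- `γ^{jk}_i(λ) = ℓ^a_{ij}(λ) − ℓ^a_{ik}(λ)`. -/
noncomputable def gamma {r : ℕ} (e : ℕ) (a : Fin r → ℤ) (lam : Multipartition r)
    (i : ℕ) (j k : Fin r) : ℤ :=
  level e (a j) (lam j) i - level e (a k) (lam k) i

/-- `γ^{jk}_{il}(λ) = γ^{jk}_i(λ) − γ^{jk}_l(λ)`. -/
noncomputable def gammaD {r : ℕ} (e : ℕ) (a : Fin r → ℤ) (lam : Multipartition r)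
    (i l : ℕ) (j k : Fin r) : ℤ :=
  gamma e a lam i j k - gamma e a lam l j k

/-- Move a bead from runner `i` to runner `l` in the β-set `S`: replace the largest
element of `S` congruent to `i` mod `e` by the smallest integer congruent to `l`
mod `e` not in `S`. -/
noncomputable def moveBead (e : ℕ) (i l : ℕ) (S : Set ℤ) : Set ℤ :=
  insert (sInf {x : ℤ | x % (e : ℤ) = (l : ℤ) % e ∧ x ∉ S})
    (S \ {sSup {x : ℤ | x % (e : ℤ) = (i : ℤ) % e ∧ x ∈ S}})

/-- The effect of `s^{jk}_{il}` on the tuple of β-sets: move a bead from runner `i`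
to runner `l` in component `j`, and from runner `l` to runner `i` in component `k`. -/
noncomputable def swapSets {r : ℕ} (e i l : ℕ) (j k : Fin r) (S : Fin r → Set ℤ) :
    Fin r → Set ℤ :=
  Function.update (Function.update S j (moveBead e i l (S j))) k
    (moveBead e l i (Function.update S j (moveBead e i l (S j)) k))

/-- `m' = s^{jk}_{il}(m)`, expressed via β-sets. -/
def IsSwap {r : ℕ} (e : ℕ) (a : Fin r → ℤ) (i l : ℕ) (j k : Fin r)
    (m m' : Multipartition r) : Prop :=
  ∀ j', betaSet (a j') (m' j') = swapSets e i l j k (fun t => betaSet (a t) (m t)) j'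

/-- `λ` lies in a core block: its weight is minimal among the weights of all
multipartitions with the same hub. -/
def MinimalWeight {r : ℕ} (e : ℕ) (a : Fin r → ℤ) (lam : Multipartition r) : Prop :=
  ∀ mu : Multipartition r, SameHub e a lam mu → weight e a lam ≤ weight e a mu

/-- `(b_0,…,b_{e−1})` is a base tuple for `mu` with respect to the multicharge `a'`
(congruent to `a` componentwise mod `e`): each `ℓ^{a'}_{ij}(mu)` is `b i` or `b i + 1`. -/
def IsBaseTuple {r : ℕ} (e : ℕ) (a : Fin r → ℤ) (mu : Multipartition r)
    (a' : Fin r → ℤ) (b : ℕ → ℤ) : Prop :=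
  (∀ j, (e : ℤ) ∣ (a' j - a j)) ∧
    ∀ i < e, ∀ j, level e (a' j) (mu j) i = b i ∨ level e (a' j) (mu j) i = b i + 1

/-- `K_i(C)` for the core block of `mu`: among all base tuples (over all admissible
multicharges), take `b i` maximal and then `b (i−1)` minimal, and set
`K_i = b_i − b_{i−1} − 1` for `i ≠ 0`, `K_0 = b_0 − b_{e−1} − 2`. -/
noncomputable def Kconst {r : ℕ} (e : ℕ) (a : Fin r → ℤ) (mu : Multipartition r)
    (i : ℕ) : ℤ :=
  let Bi : ℤ := sSup {x : ℤ | ∃ a' bt, IsBaseTuple e a mu a' bt ∧ bt i = x}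
  let iprev : ℕ := if i = 0 then e - 1 else i - 1
  let Bp : ℤ := sInf {x : ℤ | ∃ a' bt, IsBaseTuple e a mu a' bt ∧ bt i = Bi ∧ bt iprev = x}
  Bi - Bp - (if i = 0 then 2 else 1)

/-- The map `φ_i : ℤ → ℤ`. -/
def phiMap (e i : ℕ) (x : ℤ) : ℤ :=
  if x % (e : ℤ) = ((i : ℤ) - 1) % e then x + 1
  else if x % (e : ℤ) = (i : ℤ) % e then x - 1
  else x

/-- Lexicographic order on multipartitions: `λ > μ`. -/
def lexGT {r : ℕ} (lam mu : Multipartition r) : Prop :=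
  ∃ j : Fin r, (∀ j' < j, (lam j').part = (mu j').part) ∧
    ∃ i : ℕ, (∀ i' < i, (lam j).part i' = (mu j).part i') ∧
      (mu j).part i < (lam j).part i

/-- `x` is above `y`: `j < j'` or (`j = j'` and `b < b'`). -/
def NodeAbove {r : ℕ} (x y : Node r) : Prop :=
  x.2.2 < y.2.2 ∨ (x.2.2 = y.2.2 ∧ x.1 < y.1)

/-- The order on nodes: `x < y` iff `y` is above `x`. -/
def NodeLT {r : ℕ} (x y : Node r) : Prop := NodeAbove y x

/-- `N_A(λ)` = (addable `i`-nodes of `λ` below `A`) − (removable `i`-nodes of `λ` below `A`). -/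
noncomputable def Nfac {r : ℕ} (e : ℕ) (a : Fin r → ℤ) (lam : Multipartition r)
    (i : ℤ) (A : Node r) : ℤ :=
  (Set.ncard {y : Node r | (lam y.2.2).Addable y.1 y.2.1 ∧
      (a y.2.2 + (y.2.1 : ℤ) - (y.1 : ℤ)) % (e : ℤ) = i % e ∧ NodeAbove A y} : ℤ) -
  (Set.ncard {y : Node r | (lam y.2.2).Removable y.1 y.2.1 ∧
      (a y.2.2 + (y.2.1 : ℤ) - (y.1 : ℤ)) % (e : ℤ) = i % e ∧ NodeAbove A y} : ℤ)

/-- `lam` is obtained from `mu` by adding one `e`-rim hook to some component: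
on β-sets, some `β ∈ B^j` with `β + e ∉ B^j` is replaced by `β + e`. -/
def AddRimHook {r : ℕ} (e : ℕ) (a : Fin r → ℤ) (mu lam : Multipartition r) : Prop :=
  ∃ (j : Fin r) (β : ℤ), β ∈ betaSet (a j) (mu j) ∧ β + (e : ℤ) ∉ betaSet (a j) (mu j) ∧
    betaSet (a j) (lam j) = insert (β + (e : ℤ)) (betaSet (a j) (mu j) \ {β}) ∧
    ∀ j' ≠ j, betaSet (a j') (lam j') = betaSet (a j') (mu j')

/-- The number of inversions (length) of a permutation of `Fin d`. -/
noncomputable def permLength (d : ℕ) (σ : Equiv.Perm (Fin d)) : ℕ :=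
  (Finset.univ.filter (fun p : Fin d × Fin d => p.1 < p.2 ∧ σ p.2 < σ p.1)).card

/-! ### Abstract optimisation part -/

def pw {κ : Type*} (W : κ → κ → ℤ) : List κ → ℤ
  | [] => 0
  | [_] => 0
  | x :: y :: l => W x y + pw W (y :: l)

lemma pw_append {κ : Type*} (W : κ → κ → ℤ) (p q : List κ) (k : κ) :
    pw W (p ++ k :: q) = pw W (p ++ [k]) + pw W (k :: q) := by
  induction p with
  | nil => simp [pw]
  | cons x p ih =>
    cases p with
    | nil => simp [pw]
    | cons y p => simp only [List.cons_append, pw] at ih ⊢; rw [ih]; ring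

lemma pw_eq {κ : Type*} (W : κ → κ → ℤ) (x : κ) (l : List κ) :
    pw W (x :: l) = ∑ m : Fin l.length, W ((x :: l)[m.1]'(by simp)) ((x :: l)[m.1+1]'(by simp)) := by
  induction l generalizing x with
  | nil => simp [pw]
  | cons y l ih =>
    rw [pw, ih]
    simp only [List.length_cons]
    rw [Fin.sum_univ_succ]
    simp

lemma cycle_nonneg {κ : Type*} [Fintype κ] [DecidableEq κ] (W : κ → κ → ℤ)
    (h : ∀ σ : Equiv.Perm κ, 0 ≤ ∑ j, if σ j = j then 0 else W j (σ j))
    (x : κ) (l : List κ) (hl : (x :: l).Nodup) (hne : l ≠ []) :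
    0 ≤ pw W (x :: l) + W ((x :: l).getLast (by simp)) x := by
  have key := h (x :: l).formPerm
  have hlen : 0 < l.length := List.length_pos_iff.2 hne
  have e1 : (∑ j, if (x :: l).formPerm j = j then 0 else W j ((x :: l).formPerm j))
      = ∑ j ∈ (x :: l).toFinset, W j ((x :: l).formPerm j) := by
    rw [← Finset.sum_subset (Finset.subset_univ (x :: l).toFinset)]
    · apply Finset.sum_congr rfl
      intro j hj
      rw [if_neg]
      intro h2
      have := (List.formPerm_apply_mem_eq_self_iff (x :: l) hl j (by simpa using hj)).1 h2
      simp only [List.length_cons] at this; omega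
    · intro j _ hj
      rw [if_pos]
      exact List.formPerm_apply_of_notMem (by simpa using hj)
  have e2 : ∑ j ∈ (x :: l).toFinset, W j ((x :: l).formPerm j)
      = ∑ m : Fin (x :: l).length, W ((x :: l)[m.1]) ((x :: l).formPerm ((x :: l)[m.1])) := by
    rw [List.sum_toFinset _ hl, ← List.sum_ofFn]
    congr 1
    apply List.ext_getElem
    · simp
    · intro i h1 h2
      rw [List.getElem_ofFn, List.getElem_map]
  rw [e1, e2] at key
  rw [pw_eq]
  have hl1 : (x :: l).length = l.length + 1 := rfl
  have e3 := Fin.sum_univ_castSucc (n := l.length) (fun m : Fin (x :: l).length => W ((x :: l)[m.1]) ((x :: l).formPerm ((x :: l)[m.1])))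
  replace key := key.trans_eq e3
  convert key using 1
  congr 1
  · apply Finset.sum_congr rfl
    intro m _
    simp only [Fin.val_castSucc]
    rw [List.formPerm_apply_lt_getElem _ hl]
  · simp only [Fin.val_last]
    rw [List.formPerm_apply_getElem _ hl]
    congr 1
    · rw [List.getLast_eq_getElem]; rfl
    · simp

lemma potential {κ : Type*} [Fintype κ] [DecidableEq κ] (W : κ → κ → ℤ)
    (h : ∀ σ : Equiv.Perm κ, 0 ≤ ∑ j, if σ j = j then 0 else W j (σ j)) :
    ∃ t : κ → ℤ, ∀ j k, j ≠ k → t k ≤ t j + W j k := by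
  have hfin : ∀ k : κ, ∃ p : List κ, p.Nodup ∧ (∃ q, p = q ++ [k]) ∧
      ∀ p' : List κ, p'.Nodup → (∃ q, p' = q ++ [k]) → pw W p ≤ pw W p' := by
    intro k
    have hf : {p : List κ | p.Nodup ∧ (∃ q, p = q ++ [k])}.Finite := by
      apply Set.Finite.subset (s := {p : List κ | p.Nodup})
      · exact Set.finite_coe_iff.1 (inferInstanceAs (Finite {l : List κ // l.Nodup}))
      · intro p hp; exact hp.1
    obtain ⟨p, hp, hmin⟩ := Set.exists_min_image _ (pw W) hf ⟨[k], by simp, [], by simp⟩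
    exact ⟨p, hp.1, hp.2, fun p' h1 h2 => hmin p' ⟨h1, h2⟩⟩
  choose P hP1 hP2 hP3 using hfin
  refine ⟨fun k => pw W (P k), fun j k hjk => ?_⟩
  obtain ⟨q, hq⟩ := hP2 j
  have hnd := hP1 j
  by_cases hk : k ∈ P j
  · obtain ⟨p1, p2, hp⟩ := List.append_of_mem hk
    have h2 : p2 ≠ [] := by
      rintro rfl
      have := hp.symm.trans hq
      have := List.append_inj_right' this rfl
      simp at this; exact hjk this.symm
    have hnd2 : (k :: p2).Nodup := by
      rw [hp] at hnd; exact hnd.of_append_right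
    have hc := cycle_nonneg W h k p2 hnd2 h2
    have hlast : (k :: p2).getLast (by simp) = j := by
      have e1 : (p1 ++ k :: p2).getLast (by simp) = j := by
        have : p1 ++ k :: p2 = q ++ [j] := hp.symm.trans hq
        simp [this]
      rw [← e1, List.getLast_append_of_ne_nil _ (by simp)]
    rw [hlast] at hc
    have h3 := hP3 k (p1 ++ [k]) (by
      rw [hp] at hnd
      have : p1 ++ k :: p2 = (p1 ++ [k]) ++ p2 := by simp
      rw [this] at hnd; exact hnd.of_append_left) ⟨p1, rfl⟩
    have h4 := pw_append W p1 p2 k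
    show pw W (P k) ≤ pw W (P j) + W j k
    rw [hp, h4]; linarith
  · have h3 := hP3 k (P j ++ [k]) (by
      rw [List.nodup_append]; simp [hnd]; rintro a ha rfl; exact hk ha) ⟨_, rfl⟩
    have h4 := pw_append W q [k] j
    simp only
    have : P j ++ [k] = q ++ j :: [k] := by rw [hq]; simp
    rw [this, h4, ← hq] at h3
    simpa [pw] using h3

lemma optA {ι κ : Type*} [Fintype ι] [Nonempty ι] [Fintype κ] [DecidableEq ι] [DecidableEq κ]
    (n : ι → κ → ℤ)
    (hmin : ∀ n' : ι → κ → ℤ, (∀ i, ∑ j, n' i j = ∑ j, n i j) →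
      (∀ j, ∑ i, n' i j = ∑ i, n i j) → (∀ i j, n i j - 1 ≤ n' i j) →
      ∑ j, ∑ i, n i j ^ 2 ≤ ∑ j, ∑ i, n' i j ^ 2) :
    ∃ t : κ → ℤ, ∀ i j k, (n i j - t j) - (n i k - t k) ≤ 1 := by
  have hex : ∀ j k : κ, ∃ i, ∀ i', n i k - n i j ≤ n i' k - n i' j := fun j k =>
    Finite.exists_min (fun i => n i k - n i j)
  choose F hF using hex
  obtain ⟨t, ht⟩ := potential (fun j k => 1 + n (F j k) k - n (F j k) j) (by
    intro σ
    set f : κ → ι := fun j => F j (σ j) with hf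
    have := hmin (fun i j => n i j + ((if i = f (σ.symm j) then 1 else 0) - if i = f j then 1 else 0))
      (by
        intro i
        rw [Finset.sum_add_distrib, Finset.sum_sub_distrib]
        rw [Equiv.sum_comp σ.symm (fun j => if i = f j then (1:ℤ) else 0)]
        simp)
      (by
        intro j
        rw [Finset.sum_add_distrib, Finset.sum_sub_distrib]
        simp)
      (by
        intro i j
        split_ifs <;> omega)
    have hcol : ∀ j, ∑ i, (n i j + ((if i = f (σ.symm j) then 1 else 0) - if i = f j then 1 else 0)) ^ 2
        ≤ ∑ i, n i j ^ 2 + if σ j = j then 0 else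
          2 * n (f (σ.symm j)) j - 2 * n (f j) j + 2 := by
      intro j
      by_cases hj : σ j = j
      · have : σ.symm j = j := by rw [Equiv.symm_apply_eq]; exact hj.symm
        simp [hj, this]
      · rw [if_neg hj]
        have : ∀ i, (n i j + ((if i = f (σ.symm j) then 1 else 0) - if i = f j then 1 else 0)) ^ 2
          ≤ n i j ^ 2 + ((if i = f (σ.symm j) then 2 * n i j + 1 else 0)
            - (if i = f j then 2 * n i j - 1 else 0)) := by
          intro i
          split_ifs <;> nlinarith
        refine (Finset.sum_le_sum (fun i _ => this i)).trans ?_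
        rw [Finset.sum_add_distrib, Finset.sum_sub_distrib]
        simp
        linarith
    have h2 := this.trans (Finset.sum_le_sum (fun j _ => hcol j))
    rw [Finset.sum_add_distrib] at h2
    have h3 : (0:ℤ) ≤ ∑ j, if σ j = j then 0 else
          2 * n (f (σ.symm j)) j - 2 * n (f j) j + 2 := by linarith
    have h4 : (∑ j, if σ j = j then 0 else
          2 * n (f (σ.symm j)) j - 2 * n (f j) j + 2)
        = 2 * ∑ j, if σ j = j then 0 else (1 + n (F j (σ j)) (σ j) - n (F j (σ j)) j) := by
      have e1 : (∑ j, if σ j = j then 0 else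
          2 * n (f (σ.symm j)) j - 2 * n (f j) j + 2) =
          (∑ j, if σ j = j then 0 else 2 * n (f (σ.symm j)) j) +
          ∑ j, if σ j = j then 0 else (2 - 2 * n (f j) j) := by
        rw [← Finset.sum_add_distrib]
        apply Finset.sum_congr rfl
        intro j _
        split_ifs <;> ring
      rw [e1, ← Equiv.sum_comp σ, Finset.mul_sum, ← Finset.sum_add_distrib]
      apply Finset.sum_congr rfl
      intro j _
      simp only [EmbeddingLike.apply_eq_iff_eq, Equiv.symm_apply_apply, hf]
      split_ifs <;> ring
    rw [h4] at h3
    linarith)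
  refine ⟨t, fun i j k => ?_⟩
  by_cases hjk : j = k
  · subst hjk; simp
  · have h1 := ht j k hjk
    have h2 := hF j k i
    linarith

lemma optB {ι κ : Type*} [Fintype ι] [Fintype κ] [Nonempty κ]
    (n : ι → κ → ℤ) (t : κ → ℤ) (ht : ∀ i j k, (n i j - t j) - (n i k - t k) ≤ 1)
    (n' : ι → κ → ℤ) (h1 : ∀ i, ∑ j, n' i j = ∑ j, n i j)
    (h2 : ∀ j, ∑ i, n' i j = ∑ i, n i j) :
    ∑ j, ∑ i, n i j ^ 2 ≤ ∑ j, ∑ i, n' i j ^ 2 := by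
  have hex : ∀ i, ∃ k, ∀ j, n i k - t k ≤ n i j - t j := fun i =>
    Finite.exists_min (fun j => n i j - t j)
  choose F hF using hex
  set b : ι → ℤ := fun i => n i (F i) - t (F i) with hb
  have key : ∀ i j, n i j ^ 2 + ((2 * b i + 1) * (n' i j - n i j) + 2 * t j * (n' i j - n i j))
      ≤ n' i j ^ 2 := by
    intro i j
    have hy : n i j - t j - b i = 0 ∨ n i j - t j - b i = 1 := by
      have := hF i j
      have := ht i j (F i)
      simp only [hb]; omega
    have hz : 0 ≤ (n' i j - t j - b i) * (n' i j - t j - b i - 1) := by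
      rcases le_or_gt (n' i j - t j - b i) 0 with h | h
      · nlinarith
      · have : 0 ≤ n' i j - t j - b i - 1 := by omega
        positivity
    have hy2 : (n i j - t j - b i) * (n i j - t j - b i - 1) = 0 := by
      rcases hy with h | h <;> rw [h] <;> simp
    nlinarith
  have h3 := Finset.sum_le_sum (fun j (_ : j ∈ Finset.univ) =>
    Finset.sum_le_sum (fun i (_ : i ∈ Finset.univ) => key i j))
  simp only [Finset.sum_add_distrib] at h3
  have h4 : ∑ j, ∑ i, (2 * b i + 1) * (n' i j - n i j) = 0 := by
    rw [Finset.sum_comm]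
    apply Finset.sum_eq_zero
    intro i _
    rw [← Finset.mul_sum, Finset.sum_sub_distrib, h1]; simp
  have h5 : ∑ j, ∑ i, 2 * t j * (n' i j - n i j) = 0 := by
    apply Finset.sum_eq_zero
    intro j _
    rw [← Finset.mul_sum, Finset.sum_sub_distrib, h2]; simp
  linarith

/-! ### Combinatorics of beta numbers -/

def bt (a : ℤ) (p : PartitionFun) (b : ℕ) : ℤ := (p.part b : ℤ) + a - ((b : ℤ) + 1)

noncomputable def ind (e : ℕ) (x i : ℤ) : ℤ := if x % (e : ℤ) = i % (e : ℤ) then 1 else 0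

noncomputable def cnt (e : ℕ) (a : ℤ) (p : PartitionFun) (N : ℕ) (i : ℤ) : ℤ :=
  ∑ b ∈ Finset.range N, ind e (bt a p b) i

lemma ind_congr (e : ℕ) (x y i : ℤ) (h : (e : ℤ) ∣ x - y) : ind e x i = ind e y i := by
  unfold ind
  rw [(Int.emod_emod_of_dvd x dvd_rfl).symm, Int.emod_emod_of_dvd x dvd_rfl,
    (Int.emod_emod_of_dvd y dvd_rfl).symm, Int.emod_emod_of_dvd y dvd_rfl,
    Int.emod_eq_emod_iff_emod_sub_eq_zero.2 (Int.emod_eq_zero_of_dvd h)]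

lemma ind_shift (e : ℕ) (x i : ℤ) : ind e (x + 1) i = ind e x (i - 1) := by
  unfold ind
  simp only [Int.emod_eq_emod_iff_emod_sub_eq_zero]
  rw [show x + 1 - i = x - (i - 1) by ring]

lemma ind_sum (e : ℕ) (he : 0 < e) (x : ℤ) (c : ℤ) :
    ∑ i ∈ Finset.range e, ind e x (i : ℤ) * c = c := by
  have he' : (0 : ℤ) < e := by exact_mod_cast he
  have h0 := Int.emod_nonneg x he'.ne'
  have h1 := Int.emod_lt_of_pos x he'
  rw [Finset.sum_eq_single (x % (e : ℤ)).toNat]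
  · unfold ind
    rw [Int.toNat_of_nonneg h0]; simp
  · intro i hi hne
    unfold ind
    rw [if_neg, zero_mul]
    intro h
    rw [Int.emod_eq_of_lt (a := (i : ℤ)) (by positivity) (by exact_mod_cast Finset.mem_range.1 hi)] at h
    omega
  · intro h
    exfalso; apply h
    rw [Finset.mem_range]; omega

lemma floor_step (e : ℕ) (he : 0 < e) (x i : ℤ) :
    (x + 1 - i) / (e : ℤ) = (x - i) / (e : ℤ) + ind e (x + 1) i := by
  have he' : (0 : ℤ) < e := by exact_mod_cast he
  unfold ind
  simp only [Int.emod_eq_emod_iff_emod_sub_eq_zero]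
  generalize hy : x - i = y
  rw [show x + 1 - i = y + 1 by omega]
  have h1 := Int.emod_add_mul_ediv y e
  have h2 := Int.emod_nonneg y he'.ne'
  have h3 := Int.emod_lt_of_pos y he'
  set q := y / (e : ℤ)
  set m := y % (e : ℤ)
  by_cases hm : m + 1 = e
  · have : y + 1 = e * (q + 1) := by rw [mul_add, ← hm]; rw [← hm] at h1; linarith
    rw [this, Int.mul_emod_right, if_pos rfl, Int.mul_ediv_cancel_left _ he'.ne']
  · have h4 : y + 1 = (m + 1) + e * q := by linarith
    have h5 : m + 1 < e := by omega
    rw [h4, Int.add_mul_emod_self_left, Int.add_mul_ediv_left _ _ he'.ne',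
      Int.emod_eq_of_lt (by omega) h5, Int.ediv_eq_zero_of_lt (by omega) h5, if_neg (by omega)]
    ring

lemma row_count (e : ℕ) (he : 0 < e) (x i : ℤ) (m : ℕ) :
    (((Finset.range m).filter (fun c : ℕ => (x + 1 + (c : ℤ)) % (e : ℤ) = i % e)).card : ℤ) =
      (x + m - i) / e - (x - i) / e := by
  induction m with
  | zero => simp
  | succ m ih =>
    rw [Finset.range_add_one, Finset.filter_insert]
    have h1 := floor_step e he (x + m) i
    rw [show x + ((m + 1 : ℕ) : ℤ) - i = x + m + 1 - i by push_cast; ring, h1]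
    unfold ind
    rw [show x + 1 + (m : ℤ) = x + m + 1 by ring]
    split_ifs
    · rw [Finset.card_insert_of_notMem (by simp)]
      push_cast; rw [ih]; ring
    · rw [ih]; ring

lemma nodeCount_eq {r : ℕ} (e : ℕ) (he : 0 < e) (a : Fin r → ℤ) (lam : Multipartition r)
    (N : Fin r → ℕ) (hN : ∀ j b, N j ≤ b → (lam j).part b = 0) (i : ℤ) :
    (nodeCount e a lam i : ℤ) = ∑ j, ∑ b ∈ Finset.range (N j),
      ((bt (a j) (lam j) b - i) / e - (a j - b - 1 - i) / e) := by
  set S : Finset (Σ _ : Fin r, Σ _ : ℕ, ℕ) := Finset.univ.sigma (fun j => (Finset.range (N j)).sigma (fun b =>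
    (Finset.range ((lam j).part b)).filter
      (fun c : ℕ => ((a j - b - 1) + 1 + (c : ℤ)) % (e : ℤ) = i % e))) with hS
  have hset : {x : Node r | (lam x.2.2).InDiag x.1 x.2.1 ∧
      (a x.2.2 + (x.2.1 : ℤ) - (x.1 : ℤ)) % (e : ℤ) = i % e} =
      ((S.image (fun s => ((s.2.1, s.2.2, s.1) : Node r)) : Finset (Node r)) : Set (Node r)) := by
    ext ⟨b, c, j⟩
    simp only [Set.mem_ofPred_eq, Finset.coe_image, Set.mem_image, Finset.mem_coe, hS,
      Finset.mem_sigma, Finset.mem_filter, Finset.mem_range, Finset.mem_univ, true_and,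
      PartitionFun.InDiag]
    constructor
    · rintro ⟨h1, h2⟩
      refine ⟨⟨j, b, c⟩, ⟨?_, h1, ?_⟩, rfl⟩
      · by_contra h
        have := hN j b (by simpa using h)
        omega
      · rw [← h2]; congr 1; simp only; ring
    · rintro ⟨⟨j', b', c'⟩, ⟨_, h1, h2⟩, h3⟩
      simp only [Prod.mk.injEq] at h3
      obtain ⟨rfl, rfl, rfl⟩ := h3
      refine ⟨h1, ?_⟩
      rw [← h2]; congr 1; ring
  unfold nodeCount
  rw [hset, Set.ncard_coe_finset, Finset.card_image_of_injective]
  · rw [hS, Finset.card_sigma]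
    push_cast
    apply Finset.sum_congr rfl
    intro j _
    rw [Finset.card_sigma]
    push_cast
    apply Finset.sum_congr rfl
    intro b _
    rw [row_count e he]
    unfold bt
    congr 2; ring
  · rintro ⟨j, b, c⟩ ⟨j', b', c'⟩ h
    simp only [Prod.mk.injEq] at h
    obtain ⟨rfl, rfl, rfl⟩ := h
    rfl

lemma removable_eq {r : ℕ} (e : ℕ) (a : Fin r → ℤ) (lam : Multipartition r) (i : ℤ) (j : Fin r)
    (N : ℕ) (hN : ∀ b, N ≤ b → (lam j).part b = 0) :
    (removableCount e a lam i j : ℤ) = ∑ b ∈ Finset.range N,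
      if (lam j).part (b + 1) < (lam j).part b then ind e (bt (a j) (lam j) b) i else 0 := by
  have hset : {p : ℕ × ℕ | (lam j).Removable p.1 p.2 ∧
      (a j + (p.2 : ℤ) - (p.1 : ℤ)) % (e : ℤ) = i % e} =
      ((((Finset.range N).filter (fun b => (lam j).part (b + 1) < (lam j).part b ∧
        bt (a j) (lam j) b % e = i % e)).image (fun b => (b, (lam j).part b - 1)) :
          Finset (ℕ × ℕ)) : Set (ℕ × ℕ)) := by
    ext ⟨b, c⟩
    simp only [Set.mem_ofPred_eq, Finset.coe_image, Set.mem_image, Finset.mem_coe,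
      Finset.mem_filter, Finset.mem_range, PartitionFun.Removable, Prod.mk.injEq]
    constructor
    · rintro ⟨⟨h1, h2⟩, h3⟩
      refine ⟨b, ⟨?_, by omega, ?_⟩, rfl, by omega⟩
      · by_contra h
        have := hN b (by simpa using h)
        omega
      · rw [← h3]; unfold bt; congr 1; rw [h1]; push_cast; ring
    · rintro ⟨b', ⟨h0, h1, h2⟩, rfl, rfl⟩
      refine ⟨⟨by omega, by omega⟩, ?_⟩
      rw [← h2]; unfold bt; congr 1; push_cast [Nat.cast_sub (show 1 ≤ (lam j).part b' by omega)]; ring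
  unfold removableCount
  rw [hset, Set.ncard_coe_finset, Finset.card_image_of_injective _ (by
    intro x y h; simp only [Prod.mk.injEq] at h; exact h.1), Finset.card_filter]
  push_cast
  apply Finset.sum_congr rfl
  intro b _
  unfold ind
  split_ifs <;> first | rfl | (exfalso; tauto)

lemma addable_eq {r : ℕ} (e : ℕ) (a : Fin r → ℤ) (lam : Multipartition r) (i : ℤ) (j : Fin r)
    (N : ℕ) (hN : ∀ b, N ≤ b → (lam j).part b = 0) :
    (addableCount e a lam i j : ℤ) = ∑ b ∈ Finset.range (N + 1),
      if b = 0 ∨ (lam j).part b < (lam j).part (b - 1) then ind e (bt (a j) (lam j) b + 1) i else 0 := by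
  have hset : {p : ℕ × ℕ | (lam j).Addable p.1 p.2 ∧
      (a j + (p.2 : ℤ) - (p.1 : ℤ)) % (e : ℤ) = i % e} =
      ((((Finset.range (N + 1)).filter (fun b => (b = 0 ∨ (lam j).part b < (lam j).part (b - 1)) ∧
        (bt (a j) (lam j) b + 1) % e = i % e)).image (fun b => (b, (lam j).part b)) :
          Finset (ℕ × ℕ)) : Set (ℕ × ℕ)) := by
    ext ⟨b, c⟩
    simp only [Set.mem_ofPred_eq, Finset.coe_image, Set.mem_image, Finset.mem_coe,
      Finset.mem_filter, Finset.mem_range, PartitionFun.Addable, Prod.mk.injEq]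
    constructor
    · rintro ⟨⟨h1, h2⟩, h3⟩
      refine ⟨b, ⟨?_, h2, ?_⟩, rfl, by omega⟩
      · by_contra h
        have := hN (b - 1) (by omega)
        omega
      · rw [← h3]; unfold bt; congr 1; rw [h1]; ring
    · rintro ⟨b', ⟨h0, h1, h2⟩, rfl, rfl⟩
      refine ⟨⟨rfl, h1⟩, ?_⟩
      rw [← h2]; unfold bt; congr 1; ring
  unfold addableCount
  rw [hset, Set.ncard_coe_finset, Finset.card_image_of_injective _ (by
    intro x y h; simp only [Prod.mk.injEq] at h; exact h.1), Finset.card_filter]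
  push_cast
  apply Finset.sum_congr rfl
  intro b _
  unfold ind
  split_ifs <;> first | rfl | (exfalso; tauto)

lemma delta_eq {r : ℕ} (e : ℕ) (a : Fin r → ℤ) (lam : Multipartition r) (i : ℤ) (j : Fin r)
    (N : ℕ) (hN : ∀ b, N ≤ b → (lam j).part b = 0) :
    delta e a lam i j = cnt e (a j) (lam j) N i - cnt e (a j) (lam j) N (i - 1)
      - ind e (a j - N) i := by
  unfold delta
  rw [removable_eq e a lam i j N hN, addable_eq e a lam i j N hN, Finset.sum_range_succ']
  simp only [Nat.add_sub_cancel, true_or, if_true, Nat.add_eq_zero_iff, one_ne_zero, and_false, false_or]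
  have h1 : ∀ b, (if (lam j).part (b + 1) < (lam j).part b then ind e (bt (a j) (lam j) b) i else 0)
      - (if (lam j).part (b + 1) < (lam j).part b then ind e (bt (a j) (lam j) (b + 1) + 1) i else 0)
      = ind e (bt (a j) (lam j) b) i - ind e (bt (a j) (lam j) (b + 1) + 1) i := by
    intro b
    split_ifs with h
    · rfl
    · have h2 : (lam j).part (b + 1) = (lam j).part b :=
        le_antisymm ((lam j).antitone (Nat.le_succ b)) (by omega)
      have : bt (a j) (lam j) (b + 1) + 1 = bt (a j) (lam j) b := by
        unfold bt; rw [h2]; push_cast; ring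
      rw [this]; ring
  rw [← sub_sub, ← Finset.sum_sub_distrib, Finset.sum_congr rfl (fun b _ => h1 b),
    Finset.sum_sub_distrib]
  have h3 := Finset.sum_range_succ' (fun b => ind e (bt (a j) (lam j) b + 1) i) N
  have h4 := Finset.sum_range_succ (fun b => ind e (bt (a j) (lam j) b + 1) i) N
  have h5 : bt (a j) (lam j) N + 1 = a j - N := by
    unfold bt; rw [hN N le_rfl]; push_cast; ring
  rw [h5] at h4
  have h6 : cnt e (a j) (lam j) N (i - 1) = ∑ b ∈ Finset.range N, ind e (bt (a j) (lam j) b + 1) i := by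
    unfold cnt
    exact Finset.sum_congr rfl (fun b _ => (ind_shift _ _ _).symm)
  rw [h6]
  unfold cnt
  linarith

lemma nodeCount_diff {r : ℕ} (e : ℕ) (he : 0 < e) (a : Fin r → ℤ) (lam : Multipartition r)
    (N : Fin r → ℕ) (hN : ∀ j b, N j ≤ b → (lam j).part b = 0) (i : ℤ) :
    (nodeCount e a lam i : ℤ) - nodeCount e a lam (i + 1) = ∑ j, cnt e (a j) (lam j) (N j) i -
      ∑ j, ∑ b ∈ Finset.range (N j), ind e (a j - b - 1) i := by
  rw [nodeCount_eq e he a lam N hN, nodeCount_eq e he a lam N hN]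
  unfold cnt
  simp only [← Finset.sum_sub_distrib]
  apply Finset.sum_congr rfl; intro j _
  apply Finset.sum_congr rfl; intro b _
  have h1 := floor_step e he (bt (a j) (lam j) b - 1) i
  have h2 := floor_step e he (a j - b - 1 - 1) i
  rw [sub_add_cancel] at h1 h2
  rw [h1, h2, show bt (a j) (lam j) b - (i + 1) = bt (a j) (lam j) b - 1 - i by ring,
    show a j - b - 1 - (i + 1) = a j - (b:ℤ) - 1 - 1 - i by ring]
  ring

lemma cnt_sum (e : ℕ) (he : 0 < e) (a : ℤ) (p : PartitionFun) (N : ℕ) :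
    ∑ i ∈ Finset.range e, cnt e a p N i = N := by
  unfold cnt
  rw [Finset.sum_comm]
  have := fun b => ind_sum e he (bt a p b) 1
  simp only [mul_one] at this
  simp [this]

lemma cnt_mod (e : ℕ) (a : ℤ) (p : PartitionFun) (N : ℕ) (i : ℤ) :
    cnt e a p N (i % e) = cnt e a p N i := by
  unfold cnt ind; simp

/-! ### Runner levels, energy and cores -/

structure Good (e : ℕ) (a : ℤ) (p : PartitionFun) (K : ℤ) (N : ℕ) : Prop where
  hN : (N : ℤ) = a + K * e
  hz : ∀ b, N ≤ b → p.part b = 0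

lemma bt_lt (a : ℤ) (p : PartitionFun) {b c : ℕ} (h : b < c) : bt a p c < bt a p b := by
  have := p.antitone h.le
  unfold bt; omega

lemma bt_inj (a : ℤ) (p : PartitionFun) {b c : ℕ} (h : bt a p b = bt a p c) : b = c := by
  rcases lt_trichotomy b c with h1 | h1 | h1
  · have := bt_lt a p h1; omega
  · exact h1
  · have := bt_lt a p h1; omega

noncomputable def Lset (e : ℕ) (a : ℤ) (p : PartitionFun) (N : ℕ) (i : ℤ) : Finset ℤ :=
  ((Finset.range N).filter (fun b => bt a p b % e = i % e)).image (fun b => bt a p b / e)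

lemma Lset_injOn (e : ℕ) (a : ℤ) (p : PartitionFun) (N : ℕ) (i : ℤ) :
    Set.InjOn (fun b => bt a p b / (e : ℤ))
      ((Finset.range N).filter (fun b => bt a p b % e = i % e) : Set ℕ) := by
  intro b hb c hc h
  simp only [Finset.coe_filter, Set.mem_ofPred_eq] at hb hc h
  apply bt_inj a p
  rw [← Int.emod_add_mul_ediv (bt a p b) e, ← Int.emod_add_mul_ediv (bt a p c) e, hb.2, hc.2, h]

lemma Lset_card (e : ℕ) (a : ℤ) (p : PartitionFun) (N : ℕ) (i : ℤ) :
    ((Lset e a p N i).card : ℤ) = cnt e a p N i := by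
  unfold Lset
  rw [Finset.card_image_of_injOn (Lset_injOn e a p N i), Finset.card_filter]
  unfold cnt ind
  push_cast; rfl

lemma Lset_sum (e : ℕ) (a : ℤ) (p : PartitionFun) (N : ℕ) (i : ℤ) :
    ∑ l ∈ Lset e a p N i, l = ∑ b ∈ Finset.range N, ind e (bt a p b) i * (bt a p b / e) := by
  unfold Lset
  rw [Finset.sum_image (Lset_injOn e a p N i), Finset.sum_filter]
  apply Finset.sum_congr rfl
  intro b _
  unfold ind
  split_ifs <;> simp

lemma level_total (e : ℕ) (he : 0 < e) (a : ℤ) (p : PartitionFun) (N : ℕ) :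
    ∑ b ∈ Finset.range N, bt a p b / e = ∑ i ∈ Finset.range e, ∑ l ∈ Lset e a p N i, l := by
  simp only [Lset_sum]
  rw [Finset.sum_comm]
  exact Finset.sum_congr rfl (fun b _ => (ind_sum e he _ _).symm)

lemma mem_Lset (e : ℕ) (he : 0 < e) (a : ℤ) (p : PartitionFun) (N : ℕ) (i : ℕ) (hi : i < e) (l : ℤ) :
    l ∈ Lset e a p N i ↔ ∃ b < N, bt a p b = l * e + i := by
  have he' : (0 : ℤ) < e := by exact_mod_cast he
  have hi1 : ((i : ℤ)) % e = i := Int.emod_eq_of_lt (by positivity) (by exact_mod_cast hi)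
  unfold Lset
  simp only [Finset.mem_image, Finset.mem_filter, Finset.mem_range]
  constructor
  · rintro ⟨b, ⟨h1, h2⟩, h3⟩
    refine ⟨b, h1, ?_⟩
    have := Int.emod_add_mul_ediv (bt a p b) e
    rw [h2, h3, hi1] at this
    rw [← this]; ring
  · rintro ⟨b, h1, h2⟩
    refine ⟨b, ⟨h1, ?_⟩, ?_⟩
    · rw [h2]; simp
    · rw [h2, add_comm, Int.add_mul_ediv_right _ _ he'.ne',
        Int.ediv_eq_zero_of_lt (by positivity) (by exact_mod_cast hi)]; simp

lemma Good.bt_ge {e : ℕ} {a : ℤ} {p : PartitionFun} {K : ℤ} {N : ℕ} (h : Good e a p K N)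
    {b : ℕ} (hb : b < N) : -K * e ≤ bt a p b := by
  have := h.hN
  unfold bt
  have : -K * e = a - N := by linarith
  rw [this]; omega

lemma Good.bt_high {e : ℕ} {a : ℤ} {p : PartitionFun} {K : ℤ} {N : ℕ} (h : Good e a p K N)
    {b : ℕ} (hb : N ≤ b) : bt a p b = -K * e + N - b - 1 := by
  have := h.hN
  unfold bt
  have : -K * e = a - N := by linarith
  rw [this, h.hz b hb]; push_cast; ring

lemma Good.mem_beta {e : ℕ} {a : ℤ} {p : PartitionFun} {K : ℤ} {N : ℕ} (h : Good e a p K N)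
    (x : ℤ) : x ∈ betaSet a p ↔ x < -K * e ∨ ∃ b < N, bt a p b = x := by
  constructor
  · rintro ⟨b, hb⟩
    change x = bt a p b at hb
    by_cases hbN : b < N
    · exact Or.inr ⟨b, hbN, hb.symm⟩
    · left
      rw [hb, h.bt_high (by omega)]; omega
  · rintro (hx | ⟨b, _, hb⟩)
    · refine ⟨N + (-K * e - 1 - x).toNat, ?_⟩
      change x = bt a p _
      rw [h.bt_high (by omega)]
      have : ((-K * e - 1 - x).toNat : ℤ) = -K * e - 1 - x := Int.toNat_of_nonneg (by omega)
      rw [Nat.cast_add, this]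
      ring
    · exact ⟨b, hb.symm⟩

lemma Good.Lset_ge {e : ℕ} (he : 0 < e) {a : ℤ} {p : PartitionFun} {K : ℤ} {N : ℕ} (h : Good e a p K N)
    {i : ℕ} (hi : i < e) {l : ℤ} (hl : l ∈ Lset e a p N i) : -K ≤ l := by
  obtain ⟨b, hb, h2⟩ := (mem_Lset e he a p N i hi l).1 hl
  have h3 := h.bt_ge hb
  rw [h2] at h3
  have he' : (0 : ℤ) < e := by exact_mod_cast he
  have hi' : (i : ℤ) < e := by exact_mod_cast hi
  by_contra hc
  have : l ≤ -K - 1 := by omega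
  nlinarith

lemma sum_lower (L : Finset ℤ) (K : ℤ) (h : ∀ l ∈ L, -K ≤ l) :
    (L.card : ℤ) * (L.card - 1) - 2 * K * L.card ≤ 2 * ∑ l ∈ L, l := by
  induction L using Finset.induction_on_max with
  | empty => simp
  | insert m L hm ih =>
    have hnot : m ∉ L := fun hh => lt_irrefl _ (hm m hh)
    have hsub : L ⊆ Finset.Ico (-K) m := fun l hl => by
      rw [Finset.mem_Ico]; exact ⟨h l (Finset.mem_insert_of_mem hl), hm l hl⟩
    have hc := Finset.card_le_card hsub
    rw [Int.card_Ico] at hc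
    have hmK := h m (Finset.mem_insert_self _ _)
    have hc' : (L.card : ℤ) ≤ m + K := by omega
    rw [Finset.card_insert_of_notMem hnot, Finset.sum_insert hnot]
    have := ih (fun l hl => h l (Finset.mem_insert_of_mem hl))
    push_cast
    linarith

lemma closed_eq (L : Finset ℤ) (K : ℤ) (h : ∀ l ∈ L, -K ≤ l)
    (hcl : ∀ l ∈ L, -K ≤ l - 1 → l - 1 ∈ L) : L = Finset.Ico (-K) (-K + L.card) := by
  rcases L.eq_empty_or_nonempty with rfl | hne
  · simp
  have hm := L.max'_mem hne
  set m := L.max' hne with hmdef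
  have hdown : ∀ t : ℕ, -K ≤ m - t → m - t ∈ L := by
    intro t
    induction t with
    | zero => intro _; simpa using hm
    | succ t ih =>
      intro ht
      push_cast at ht ⊢
      have := hcl (m - t) (ih (by omega)) (by omega)
      rwa [show m - t - 1 = m - (t + 1 : ℤ) by ring] at this
  have hL : L = Finset.Ico (-K) (m + 1) := by
    ext l
    rw [Finset.mem_Ico]
    constructor
    · intro hl
      have := L.le_max' l hl
      exact ⟨h l hl, by omega⟩
    · rintro ⟨h1, h2⟩
      have := hdown (m - l).toNat (by omega)
      rwa [show m - ((m - l).toNat : ℤ) = l by omega] at this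
  have hc : (L.card : ℤ) = m + 1 + K := by
    have := h m hm
    rw [hL, Int.card_Ico]; omega
  rw [hc, show -K + (m + 1 + K) = m + 1 by ring]
  exact hL

lemma sum_Ico_eq (K : ℤ) (n : ℕ) :
    2 * ∑ l ∈ Finset.Ico (-K) (-K + n), l = (n : ℤ) * (n - 1) - 2 * K * n := by
  induction n with
  | zero => simp
  | succ n ih =>
    have : Finset.Ico (-K) (-K + (n + 1 : ℕ)) = insert (-K + (n:ℤ)) (Finset.Ico (-K) (-K + n)) := by
      ext x; simp only [Finset.mem_insert, Finset.mem_Ico]; push_cast; omega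
    rw [this, Finset.sum_insert (by simp), mul_add, ih]
    push_cast; ring

lemma Good.core_Lset {e : ℕ} (he : 0 < e) {a : ℤ} {p : PartitionFun} {K : ℤ} {N : ℕ}
    (h : Good e a p K N) (hc : IsECore e a p) {i : ℕ} (hi : i < e) :
    Lset e a p N i = Finset.Ico (-K) (-K + cnt e a p N i) := by
  rw [← Lset_card]
  apply closed_eq
  · intro l hl; exact h.Lset_ge he hi hl
  · intro l hl hl1
    rw [mem_Lset e he a p N i hi] at hl ⊢
    obtain ⟨b, hb, h2⟩ := hl
    have h3 := hc (bt a p b) ⟨b, rfl⟩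
    rw [h.mem_beta] at h3
    rcases h3 with h3 | ⟨b', hb', h4⟩
    · exfalso
      rw [h2] at h3
      have he' : (0 : ℤ) < e := by exact_mod_cast he
      have : (0 : ℤ) ≤ i := by positivity
      nlinarith
    · exact ⟨b', hb', by rw [h4, h2]; ring⟩

lemma Good.energy_le {e : ℕ} (he : 0 < e) {a : ℤ} {p : PartitionFun} {K : ℤ} {N : ℕ}
    (h : Good e a p K N) :
    ∑ i ∈ Finset.range e, cnt e a p N i ^ 2 - (1 + 2 * K) * N
      ≤ 2 * ∑ b ∈ Finset.range N, bt a p b / e := by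
  rw [level_total e he, Finset.mul_sum, ← cnt_sum e he a p N, Finset.mul_sum,
    ← Finset.sum_sub_distrib]
  apply Finset.sum_le_sum
  intro i hi
  have := sum_lower (Lset e a p N i) K (fun l hl => h.Lset_ge he (Finset.mem_range.1 hi) hl)
  rw [Lset_card] at this
  linarith

lemma Good.energy_eq {e : ℕ} (he : 0 < e) {a : ℤ} {p : PartitionFun} {K : ℤ} {N : ℕ}
    (h : Good e a p K N) (hc : IsECore e a p) :
    ∑ i ∈ Finset.range e, cnt e a p N i ^ 2 - (1 + 2 * K) * N
      = 2 * ∑ b ∈ Finset.range N, bt a p b / e := by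
  rw [level_total e he, Finset.mul_sum, ← cnt_sum e he a p N, Finset.mul_sum,
    ← Finset.sum_sub_distrib]
  apply Finset.sum_congr rfl
  intro i hi
  rw [h.core_Lset he hc (Finset.mem_range.1 hi), ← Lset_card, sum_Ico_eq]
  ring

lemma Good.level_eq {e : ℕ} (he : 0 < e) {a : ℤ} {p : PartitionFun} {K : ℤ} {N : ℕ}
    (h : Good e a p K N) (hc : IsECore e a p) {i : ℕ} (hi : i < e) (u : ℤ) :
    level e (a + e * u) p i = cnt e a p N i - K - 1 + u := by
  have he' : (0 : ℤ) < e := by exact_mod_cast he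
  have hi' : (i : ℤ) < e := by exact_mod_cast hi
  have hi0 : (0 : ℤ) ≤ i := by positivity
  have hn : 0 ≤ cnt e a p N i := by rw [← Lset_card]; positivity
  have key : ∀ x : ℤ, x * e + i ∈ betaSet (a + e * u) p ↔ x < cnt e a p N i - K + u := by
    intro x
    have h1 : x * e + i ∈ betaSet (a + e * u) p ↔ (x - u) * e + i ∈ betaSet a p := by
      unfold betaSet
      simp only [Set.mem_ofPred_eq]
      refine exists_congr fun b => ?_
      constructor <;> intro hh <;> linarith
    rw [h1, h.mem_beta, ← mem_Lset e he a p N i hi, h.core_Lset he hc hi, Finset.mem_Ico]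
    constructor
    · rintro (h2 | h2)
      · have : x - u < -K := by
          by_contra hcc
          have : -K ≤ x - u := by omega
          nlinarith
        omega
      · omega
    · intro h2
      by_cases h3 : x - u < -K
      · left
        have : x - u ≤ -K - 1 := by omega
        nlinarith
      · right; omega
  unfold level
  apply IsGreatest.csSup_eq
  constructor
  · rw [Set.mem_ofPred_eq, key]; omega
  · intro x hx
    rw [Set.mem_ofPred_eq, key] at hx; omega

lemma exists_core {e : ℕ} (he : 0 < e) (a K : ℤ) (N : ℕ) (hN : (N : ℤ) = a + K * e)
    (m : ℕ → ℕ) (hm : ∑ i ∈ Finset.range e, m i = N) :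
    ∃ p : PartitionFun, Good e a p K N ∧ IsECore e a p ∧
      ∀ i < e, cnt e a p N (i : ℤ) = m i := by
  set G : Finset ℕ := (Finset.range e).biUnion (fun i => (Finset.range (m i)).image (fun l => l * e + i))
    with hG
  have memG : ∀ y, y ∈ G ↔ y / e < m (y % e) := by
    intro y
    simp only [hG, Finset.mem_biUnion, Finset.mem_range, Finset.mem_image]
    constructor
    · rintro ⟨i, hi, l, hl, rfl⟩
      rw [add_comm, Nat.add_mul_div_right _ _ he, Nat.add_mul_mod_self_right, Nat.mod_eq_of_lt hi,
        Nat.div_eq_of_lt hi, zero_add]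
      exact hl
    · intro h
      exact ⟨y % e, Nat.mod_lt _ he, y / e, h, by rw [mul_comm]; exact Nat.div_add_mod y e⟩
  have hcard1 : ∀ i < e, (G.filter (fun y => y % e = i)).card = m i := by
    intro i hi
    have : G.filter (fun y => y % e = i) = (Finset.range (m i)).image (fun l => l * e + i) := by
      ext y
      simp only [Finset.mem_filter, memG, Finset.mem_image, Finset.mem_range]
      constructor
      · rintro ⟨h1, h2⟩
        rw [h2] at h1
        exact ⟨y / e, h1, by rw [mul_comm, ← h2]; exact Nat.div_add_mod y e⟩
      · rintro ⟨l, hl, rfl⟩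
        rw [add_comm, Nat.add_mul_div_right _ _ he, Nat.add_mul_mod_self_right, Nat.mod_eq_of_lt hi,
          Nat.div_eq_of_lt hi, zero_add]
        exact ⟨hl, rfl⟩
    rw [this, Finset.card_image_of_injective, Finset.card_range]
    intro x y hxy
    simp only [add_left_inj] at hxy
    exact Nat.eq_of_mul_eq_mul_right he hxy
  have hcard : G.card = N := by
    rw [← hm, Finset.card_eq_sum_card_fiberwise (f := fun y => y % e) (t := Finset.range e)
      (fun y _ => by simp [Nat.mod_lt _ he])]
    exact Finset.sum_congr rfl (fun i hi => hcard1 i (Finset.mem_range.1 hi))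
  set g := G.orderEmbOfFin hcard with hg
  have hge : ∀ k : ℕ, ∀ hk : k < N, k ≤ g ⟨k, hk⟩ := by
    intro k
    induction k with
    | zero => intro _; exact Nat.zero_le _
    | succ k ih =>
      intro hk
      have h1 := ih (by omega)
      have h2 : g ⟨k, by omega⟩ < g ⟨k + 1, hk⟩ := g.strictMono (by simp)
      omega
  set f : ℕ → ℕ := fun b => if h : b < N then g ⟨N - 1 - b, by omega⟩ - (N - 1 - b) else 0 with hf
  have hfN : ∀ b, N ≤ b → f b = 0 := by
    intro b hb; simp only [hf]; rw [dif_neg (by omega)]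
  have hanti : Antitone f := by
    apply antitone_nat_of_succ_le
    intro b
    by_cases hb : b + 1 < N
    · simp only [hf]
      rw [dif_pos hb, dif_pos (by omega)]
      have h2 : g ⟨N - 1 - (b + 1), by omega⟩ < g ⟨N - 1 - b, by omega⟩ := g.strictMono (by
        rw [Fin.mk_lt_mk]; omega)
      omega
    · rw [hfN (b + 1) (by omega)]; exact Nat.zero_le _
  set p : PartitionFun := ⟨f, hanti, N, hfN⟩ with hp
  have hgood : Good e a p K N := ⟨hN, hfN⟩
  have hbt : ∀ b, ∀ hb : b < N, bt a p b = (g ⟨N - 1 - b, by omega⟩ : ℕ) - K * e := by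
    intro b hb
    unfold bt
    have h1 : p.part b = g ⟨N - 1 - b, by omega⟩ - (N - 1 - b) := by
      simp only [hp, hf]; rw [dif_pos hb]
    have h2 := hge (N - 1 - b) (by omega)
    rw [h1]
    generalize (g ⟨N - 1 - b, by omega⟩ : ℕ) = z at h2 ⊢
    have hN2 : K * (e : ℤ) = N - a := by linarith
    rw [hN2]
    omega
  have hmem : ∀ x : ℤ, (∃ b < N, bt a p b = x) ↔ ∃ y ∈ G, (y : ℤ) - K * e = x := by
    intro x
    constructor
    · rintro ⟨b, hb, h⟩
      exact ⟨_, Finset.orderEmbOfFin_mem G hcard ⟨N - 1 - b, by omega⟩, by rw [← h, hbt b hb]⟩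
    · rintro ⟨y, hy, h⟩
      have : y ∈ Set.range g := by rw [hg, Finset.range_orderEmbOfFin]; exact hy
      obtain ⟨⟨k, hk⟩, rfl⟩ := this
      refine ⟨N - 1 - k, by omega, ?_⟩
      rw [hbt _ (by omega), ← h]
      have : (⟨N - 1 - (N - 1 - k), by omega⟩ : Fin N) = ⟨k, hk⟩ := by
        rw [Fin.mk.injEq]; omega
      rw [this]
  refine ⟨p, hgood, ?_, ?_⟩
  · intro x hx
    rw [hgood.mem_beta, hmem] at hx ⊢
    rcases hx with hx | ⟨y, hy, hx⟩
    · left; omega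
    · by_cases hye : y < e
      · left
        rw [← hx]
        have : (y : ℤ) < e := by exact_mod_cast hye
        linarith
      · right
        refine ⟨y - e, ?_, ?_⟩
        · rw [memG] at hy ⊢
          have h1 : (y - e) % e = y % e := (Nat.mod_eq_sub_mod (by omega)).symm
          have h2 : (y - e) / e ≤ y / e := Nat.div_le_div_right (by omega)
          rw [h1]; omega
        · rw [← hx, Nat.cast_sub (by omega)]; ring
  · intro i hi
    rw [← Lset_card]
    have : Lset e a p N i = ((Finset.range (m i)).image (fun l : ℕ => (l : ℤ) - K)) := by
      ext l
      rw [mem_Lset e he a p N i hi, hmem]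
      simp only [Finset.mem_image, Finset.mem_range]
      constructor
      · rintro ⟨y, hy, h⟩
        rw [memG] at hy
        have h3 : (y : ℤ) = (l + K) * e + i := by linarith
        have he' : (0 : ℤ) < e := by exact_mod_cast he
        have hi' : (i : ℤ) < e := by exact_mod_cast hi
        have h4 : ((y / e : ℕ) : ℤ) = l + K := by
          push_cast
          rw [h3, add_comm, Int.add_mul_ediv_right _ _ he'.ne',
            Int.ediv_eq_zero_of_lt (by positivity) hi', zero_add]
        have h5 : y % e = i := by
          zify
          rw [h3, add_comm, Int.add_mul_emod_self_right, Int.emod_eq_of_lt (by positivity) hi']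
        rw [h5] at hy
        exact ⟨y / e, hy, by rw [h4]; ring⟩
      · rintro ⟨l', hl', rfl⟩
        refine ⟨l' * e + i, ?_, ?_⟩
        · rw [memG, add_comm, Nat.add_mul_div_right _ _ he, Nat.add_mul_mod_self_right,
            Nat.mod_eq_of_lt hi, Nat.div_eq_of_lt hi, zero_add]
          exact hl'
        · push_cast; ring
    rw [this, Finset.card_image_of_injective, Finset.card_range]
    intro x y hxy
    simpa using hxy

/-! ### Assembling -/

lemma exists_K {e : ℕ} (he : 0 < e) (a : ℤ) (p : PartitionFun) :
    ∃ K0 : ℤ, ∀ K, K0 ≤ K → 0 ≤ a + K * e ∧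
      ∀ N : ℕ, (N : ℤ) = a + K * e → e ≤ N ∧ ∀ b, N ≤ b + e → p.part b = 0 := by
  obtain ⟨M, hM⟩ := p.finite_support
  refine ⟨|a| + M + 1, fun K hK => ?_⟩
  have h1 : (|a| + M + 1) * (e : ℤ) ≤ K * e := by gcongr
  have h2 : (|a| + M) * 1 ≤ (|a| + M) * (e : ℤ) := by
    apply mul_le_mul_of_nonneg_left _ (by positivity)
    exact_mod_cast he
  have h3 := neg_abs_le a
  have h4 : (M : ℤ) + e ≤ a + K * e := by linarith
  refine ⟨by omega, fun N hN => ⟨by omega, fun b hb => hM b (by omega)⟩⟩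

lemma exists_KN {e r : ℕ} (he : 0 < e) (a : Fin r → ℤ) (lam mu : Multipartition r) :
    ∃ (K : ℤ) (N : Fin r → ℕ), (∀ j, (N j : ℤ) = a j + K * e) ∧ (∀ j, e ≤ N j) ∧
      (∀ j b, N j ≤ b + e → (lam j).part b = 0) ∧ (∀ j b, N j ≤ b + e → (mu j).part b = 0) := by
  choose k1 hk1 using fun j => exists_K he (a j) (lam j)
  choose k2 hk2 using fun j => exists_K he (a j) (mu j)
  obtain ⟨K, hK⟩ : ∃ K : ℤ, ∀ j, k1 j ≤ K ∧ k2 j ≤ K := by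
    refine ⟨∑ j, (|k1 j| + |k2 j|), fun j => ?_⟩
    have := Finset.single_le_sum (f := fun j => |k1 j| + |k2 j|) (fun j _ => by positivity)
      (Finset.mem_univ j)
    have h1 := le_abs_self (k1 j)
    have h2 := le_abs_self (k2 j)
    have h3 := abs_nonneg (k1 j)
    have h4 := abs_nonneg (k2 j)
    constructor <;> linarith
  have hN : ∀ j, ((a j + K * e).toNat : ℤ) = a j + K * e := fun j =>
    Int.toNat_of_nonneg (hk1 j K (hK j).1).1
  exact ⟨K, fun j => (a j + K * e).toNat, hN, fun j => ((hk1 j K (hK j).1).2 _ (hN j)).1,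
    fun j => ((hk1 j K (hK j).1).2 _ (hN j)).2, fun j => ((hk2 j K (hK j).2).2 _ (hN j)).2⟩

lemma const_of_step (D : ℤ → ℤ) (h : ∀ i, D i = D (i - 1)) (i : ℤ) : D i = D 0 := by
  induction i with
  | zero => rfl
  | succ n ih => rw [h, ← ih]; congr 1; ring
  | pred n ih => rw [← ih, h (-n)]

lemma hub_eq {e r : ℕ} (a : Fin r → ℤ) (lam : Multipartition r)
    (N : Fin r → ℕ) (hz : ∀ j b, N j ≤ b → (lam j).part b = 0) (i : ℤ) :
    hub e a lam i = ∑ j, cnt e (a j) (lam j) (N j) i - ∑ j, cnt e (a j) (lam j) (N j) (i - 1)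
      - ∑ j, ind e (a j - N j) i := by
  unfold hub
  rw [← Finset.sum_sub_distrib, ← Finset.sum_sub_distrib]
  exact Finset.sum_congr rfl (fun j _ => delta_eq e a lam i j (N j) (hz j))

lemma rows_of_hub {e r : ℕ} (he : 0 < e) (a : Fin r → ℤ) (lam mu : Multipartition r)
    (N : Fin r → ℕ) (hz : ∀ j b, N j ≤ b → (lam j).part b = 0)
    (hz' : ∀ j b, N j ≤ b → (mu j).part b = 0) (h : SameHub e a lam mu) (i : ℤ) :
    ∑ j, cnt e (a j) (lam j) (N j) i = ∑ j, cnt e (a j) (mu j) (N j) i := by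
  set D : ℤ → ℤ := fun i => ∑ j, cnt e (a j) (lam j) (N j) i - ∑ j, cnt e (a j) (mu j) (N j) i with hD
  have hc := const_of_step D (by
    intro i
    have := h i
    rw [hub_eq a lam N hz, hub_eq a mu N hz'] at this
    simp only [hD]; linarith)
  have hs : ∑ i ∈ Finset.range e, D i = 0 := by
    simp only [hD]
    rw [Finset.sum_sub_distrib, Finset.sum_comm, Finset.sum_comm (s := Finset.range e)]
    simp only [cnt_sum e he]; simp
  rw [Finset.sum_congr rfl (fun (i : ℕ) _ => hc (i : ℤ))] at hs
  simp only [Finset.sum_const, Finset.card_range, nsmul_eq_mul] at hs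
  have h0 : D 0 = 0 := by
    rcases mul_eq_zero.1 hs with h1 | h1
    · exfalso; have : e = 0 := by exact_mod_cast h1
      omega
    · exact h1
  have := (hc i).trans h0
  simp only [hD] at this; linarith

lemma weight_diff {e r : ℕ} (he : 0 < e) (a : Fin r → ℤ) (lam mu : Multipartition r)
    (N : Fin r → ℕ) (hz : ∀ j b, N j ≤ b → (lam j).part b = 0)
    (hz' : ∀ j b, N j ≤ b → (mu j).part b = 0)
    (h : ∀ i, ∑ j, cnt e (a j) (lam j) (N j) i = ∑ j, cnt e (a j) (mu j) (N j) i) :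
    2 * (weight e a lam - weight e a mu) =
      ((r * (∑ j, (2 * ∑ b ∈ Finset.range (N j), bt (a j) (lam j) b / e) -
        ∑ j, (2 * ∑ b ∈ Finset.range (N j), bt (a j) (mu j) b / e)) : ℤ) : ℚ) := by
  have h1 : ∀ i : ℤ, (nodeCount e a lam i : ℤ) - nodeCount e a lam (i + 1) =
      (nodeCount e a mu i : ℤ) - nodeCount e a mu (i + 1) := by
    intro i
    rw [nodeCount_diff e he a lam N hz, nodeCount_diff e he a mu N hz', h]
  have h2 := const_of_step (fun i => (nodeCount e a lam i : ℤ) - nodeCount e a mu i) (by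
    intro i
    have := h1 (i - 1)
    rw [sub_add_cancel] at this
    linarith)
  have h3 : 2 * ((nodeCount e a lam 0 : ℤ) - nodeCount e a mu 0) =
      ∑ j, (2 * ∑ b ∈ Finset.range (N j), bt (a j) (lam j) b / e) -
        ∑ j, (2 * ∑ b ∈ Finset.range (N j), bt (a j) (mu j) b / e) := by
    rw [nodeCount_eq e he a lam N hz, nodeCount_eq e he a mu N hz']
    simp only [sub_zero, Finset.sum_sub_distrib, ← Finset.mul_sum]
    ring
  rw [← h3]
  unfold weight
  have h4 : ∀ i : ℕ, ((nodeCount e a lam (i : ℤ) : ℚ) - (nodeCount e a lam ((i : ℤ) + 1) : ℚ)) ^ 2 =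
      ((nodeCount e a mu (i : ℤ) : ℚ) - (nodeCount e a mu ((i : ℤ) + 1) : ℚ)) ^ 2 := by
    intro i
    have := h1 i
    have h5 : ((nodeCount e a lam (i : ℤ) : ℚ) - (nodeCount e a lam ((i : ℤ) + 1) : ℚ)) =
      ((nodeCount e a mu (i : ℤ) : ℚ) - (nodeCount e a mu ((i : ℤ) + 1) : ℚ)) := by
      exact_mod_cast this
    rw [h5]
  rw [Finset.sum_congr rfl (fun i _ => h4 i)]
  have h6 : ∑ j : Fin r, (nodeCount e a lam (a j) : ℚ) - ∑ j : Fin r, (nodeCount e a mu (a j) : ℚ)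
      = r * ((nodeCount e a lam 0 : ℚ) - nodeCount e a mu 0) := by
    rw [← Finset.sum_sub_distrib]
    have : ∀ j : Fin r, (nodeCount e a lam (a j) : ℚ) - (nodeCount e a mu (a j) : ℚ) =
        (nodeCount e a lam 0 : ℚ) - nodeCount e a mu 0 := by
      intro j
      have := h2 (a j)
      exact_mod_cast this
    rw [Finset.sum_congr rfl (fun j _ => this j)]
    rw [Finset.sum_const, Finset.card_univ, Fintype.card_fin, nsmul_eq_mul]
  push_cast
  linarith

/-- Proposition 3.8: a multicore `λ` lies in a core block iff there
is a multicharge `a'` congruent to `a` componentwise mod `e` such that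
`|ℓ^{a'}_{ij}(λ) − ℓ^{a'}_{ik}(λ)| ≤ 1` for every runner `i` and all components `j, k`. -/
theorem stmt_19 {e r : ℕ} (he : 2 ≤ e) (hr : 0 < r) (a : Fin r → ℤ)
    (lam : Multipartition r) (hcore : IsMulticore e a lam) :
    MinimalWeight e a lam ↔
      ∃ a' : Fin r → ℤ, (∀ j, (e : ℤ) ∣ (a' j - a j)) ∧
        ∀ i < e, ∀ j k : Fin r,
          |level e (a' j) (lam j) i - level e (a' k) (lam k) i| ≤ 1 := by
  have he0 : 0 < e := by omega
  have hcr : ∀ (p : PartitionFun) (x : ℤ) (M : ℕ), ∑ i ∈ Finset.range e, cnt e x p M i ^ 2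
      = ∑ i : Fin e, cnt e x p M (i : ℕ) ^ 2 := fun p x M => Finset.sum_range _
  have hcs : ∀ (p : PartitionFun) (x : ℤ) (M : ℕ), ∑ i : Fin e, cnt e x p M (i : ℕ) = M := by
    intro p x M
    rw [← cnt_sum e he0 x p M, Finset.sum_range]
  have hrQ : (0 : ℚ) < r := by exact_mod_cast hr
  have hrZ : (0 : ℤ) < r := by exact_mod_cast hr
  constructor
  · intro hmin
    obtain ⟨K, N, hN, heN, hz, -⟩ := exists_KN he0 a lam lam
    have hgood : ∀ j, Good e (a j) (lam j) K (N j) := fun j => ⟨hN j, fun b hb => hz j b (by omega)⟩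
    have : Nonempty (Fin e) := ⟨⟨0, he0⟩⟩
    have hpos : ∀ (i : Fin e) j, 1 ≤ cnt e (a j) (lam j) (N j) (i : ℕ) := by
      intro i j
      rw [← Lset_card]
      have : -K ∈ Lset e (a j) (lam j) (N j) (i : ℕ) := by
        rw [mem_Lset e he0 _ _ _ _ i.2]
        have := heN j
        have hi := i.2
        refine ⟨N j - 1 - i, by omega, ?_⟩
        unfold bt
        rw [hz j _ (by omega)]
        have h3 := hN j
        have : -K * (e : ℤ) = a j - N j := by linarith
        rw [this]; omega
      have := Finset.card_pos.2 ⟨_, this⟩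
      omega
    obtain ⟨t, ht⟩ := optA (fun (i : Fin e) (j : Fin r) => cnt e (a j) (lam j) (N j) (i : ℕ)) (by
      intro n' h1 h2 h3
      have hn0 : ∀ i j, 0 ≤ n' i j := by
        intro i j
        have := h3 i j
        have := hpos i j
        omega
      have hmu : ∀ j, ∃ p : PartitionFun, Good e (a j) p K (N j) ∧ IsECore e (a j) p ∧
          ∀ i < e, cnt e (a j) p (N j) (i : ℤ) =
            ((if h : i < e then (n' ⟨i, h⟩ j).toNat else 0 : ℕ) : ℤ) := by
        intro j
        refine exists_core he0 (a j) K (N j) (hN j)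
          (fun i => if h : i < e then (n' ⟨i, h⟩ j).toNat else 0) ?_
        rw [Finset.sum_range]
        rw [← Nat.cast_inj (R := ℤ), Nat.cast_sum, ← hcs (lam j) (a j) (N j), ← h2 j]
        apply Finset.sum_congr rfl
        intro i _
        rw [dif_pos i.2, Int.toNat_of_nonneg (hn0 _ _)]
      choose mu hmg hmc hmn using hmu
      have hmn' : ∀ (i : Fin e) j, cnt e (a j) (mu j) (N j) (i : ℕ) = n' i j := by
        intro i j
        rw [hmn j i i.2, dif_pos i.2, Int.toNat_of_nonneg (hn0 _ _)]
      have hrows : ∀ i : ℤ, ∑ j, cnt e (a j) (lam j) (N j) i = ∑ j, cnt e (a j) (mu j) (N j) i := by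
        intro i
        have he' : (0 : ℤ) < e := by exact_mod_cast he0
        have g0 := Int.emod_nonneg i he'.ne'
        have g1 := Int.emod_lt_of_pos i he'
        have := h1 ⟨(i % (e : ℤ)).toNat, by omega⟩
        simp only [← hmn', Int.toNat_of_nonneg g0, cnt_mod] at this
        exact this.symm
      have hhub : SameHub e a lam mu := by
        intro i
        rw [hub_eq a lam N (fun j => (hgood j).hz), hub_eq a mu N (fun j => (hmg j).hz), hrows, hrows]
      have hw := hmin mu hhub
      have hd := weight_diff he0 a lam mu N (fun j => (hgood j).hz) (fun j => (hmg j).hz) hrows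
      have hle : (((r : ℤ) * (∑ j, (2 * ∑ b ∈ Finset.range (N j), bt (a j) (lam j) b / e) -
        ∑ j, (2 * ∑ b ∈ Finset.range (N j), bt (a j) (mu j) b / e)) : ℤ) : ℚ) ≤ 0 := by
        rw [← hd]; linarith
      have hle2 : ((r : ℤ) * (∑ j, (2 * ∑ b ∈ Finset.range (N j), bt (a j) (lam j) b / e) -
        ∑ j, (2 * ∑ b ∈ Finset.range (N j), bt (a j) (mu j) b / e)) : ℤ) ≤ 0 := by
        exact_mod_cast hle
      have hle3 := nonpos_of_mul_nonpos_right hle2 hrZ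
      rw [Finset.sum_congr rfl (fun j _ => ((hgood j).energy_eq he0 (hcore j)).symm),
        Finset.sum_congr rfl (fun j _ => ((hmg j).energy_eq he0 (hmc j)).symm),
        Finset.sum_sub_distrib, Finset.sum_sub_distrib] at hle3
      simp only [hcr, hmn'] at hle3
      linarith)
    refine ⟨fun j => a j + e * (- t j), fun j => ⟨- t j, by ring⟩, ?_⟩
    intro i hi j k
    rw [(hgood j).level_eq he0 (hcore j) hi, (hgood k).level_eq he0 (hcore k) hi, abs_le]
    have h1 := ht ⟨i, hi⟩ j k
    have h2 := ht ⟨i, hi⟩ k j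
    constructor <;> linarith
  · rintro ⟨a', ha', hlev⟩ mu hhub
    obtain ⟨K, N, hN, heN, hz, hz'⟩ := exists_KN he0 a lam mu
    have hgood : ∀ j, Good e (a j) (lam j) K (N j) := fun j => ⟨hN j, fun b hb => hz j b (by omega)⟩
    have hmg : ∀ j, Good e (a j) (mu j) K (N j) := fun j => ⟨hN j, fun b hb => hz' j b (by omega)⟩
    have hrows := rows_of_hub he0 a lam mu N (fun j => (hgood j).hz) (fun j => (hmg j).hz) hhub
    choose u hu using ha'
    have hau : ∀ j, a' j = a j + e * u j := fun j => by have := hu j; linarith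
    have : Nonempty (Fin r) := ⟨⟨0, hr⟩⟩
    have hopt := optB (fun (i : Fin e) (j : Fin r) => cnt e (a j) (lam j) (N j) (i : ℕ))
      (fun j => - u j) (by
        intro i j k
        have := hlev i i.2 j k
        rw [hau, hau, (hgood j).level_eq he0 (hcore j) i.2, (hgood k).level_eq he0 (hcore k) i.2,
          abs_le] at this
        linarith [this.2])
      (fun (i : Fin e) (j : Fin r) => cnt e (a j) (mu j) (N j) (i : ℕ))
      (fun i => (hrows _).symm) (fun j => by rw [hcs, hcs])
    have hd := weight_diff he0 a lam mu N (fun j => (hgood j).hz) (fun j => (hmg j).hz) hrows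
    have h5 : ∑ j, (2 * ∑ b ∈ Finset.range (N j), bt (a j) (lam j) b / e) ≤
        ∑ j, (2 * ∑ b ∈ Finset.range (N j), bt (a j) (mu j) b / e) := by
      rw [Finset.sum_congr rfl (fun j _ => ((hgood j).energy_eq he0 (hcore j)).symm)]
      refine le_trans ?_ (Finset.sum_le_sum (fun j _ => (hmg j).energy_le he0))
      rw [Finset.sum_sub_distrib, Finset.sum_sub_distrib]
      simp only [hcr]
      linarith
    have h6 : ((r : ℤ) * (∑ j, (2 * ∑ b ∈ Finset.range (N j), bt (a j) (lam j) b / e) -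
        ∑ j, (2 * ∑ b ∈ Finset.range (N j), bt (a j) (mu j) b / e)) : ℤ) ≤ 0 :=
      mul_nonpos_of_nonneg_of_nonpos hrZ.le (by linarith)
    have h7 : (((r : ℤ) * (∑ j, (2 * ∑ b ∈ Finset.range (N j), bt (a j) (lam j) b / e) -
        ∑ j, (2 * ∑ b ∈ Finset.range (N j), bt (a j) (mu j) b / e)) : ℤ) : ℚ) ≤ 0 := by
      exact_mod_cast h6
    rw [← hd] at h7
    linarith

end AK
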